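/- Let b ≥ 2 be an integer and define g : {−1,1}^{b−1} → ℤ by g(σ) = σ₁ + Σ_{i=1}^{b−2} σᵢσᵢ₊₁ − σ_{b−1}. Then the maximum of g equals b − 2, and the set of maximizers of g has exactly b elements: for each i ∈ {1, …, b} there is exactly one maximizer, namely the configuration with σ_j = 1 for 1 ≤ j ≤ i−1 and σ_j = −1 for i ≤ j ≤ b−1. -/

import Mathlib

/-- The first interior spin `σ₁` of a block configuration `σ : {−1,1}^{b−1}`
(interior sites `1, …, b−1` are indexed by `Fin (b−1)`, site `i` ↦ index `i−1`). -/
def firstSpin (b : ℕ) (σ : Fin (b - 1) → ℤ) : ℤ :=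
  if h : 0 < b - 1 then σ ⟨0, h⟩ else 0

/-- The last interior spin `σ_{b−1}` of a block configuration. -/
def lastSpin (b : ℕ) (σ : Fin (b - 1) → ℤ) : ℤ :=
  if h : b - 2 < b - 1 then σ ⟨b - 2, h⟩ else 0

/-- The interior bond sum `Σ_{i=1}^{b−2} σᵢ σᵢ₊₁` of a block configuration. -/
def bondSum (b : ℕ) (σ : Fin (b - 1) → ℤ) : ℤ :=
  ∑ i : Fin (b - 1), if h : (i : ℕ) + 1 < b - 1 then σ i * σ ⟨(i : ℕ) + 1, h⟩ else 0

/-!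
On a chain of `n + 1` interior spins the identity
`n - g(σ) = ∑ (1 - σᵢ)(1 + σᵢ₊₁)`, obtained by telescoping the linear terms, has nonnegative
summands. Hence `g ≤ n`, and for spins `±1` equality holds exactly when no `-1` is followed by
a `+1`, that is, when `σ` is antitone. An antitone two-valued sequence is determined by the place
where it drops.
-/

section DomainWall

variable {α : Type*} {x y : α} {m : ℕ}

/-- The configuration on sites `1, …, m` with value `x` before site `i` and `y` from site `i` on,
i.e. with a domain wall just before site `i`. Site `j` is the index `j - 1` of `Fin m`, so `i = 1`
and `i = m + 1` give the two constant configurations. -/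
def domainWall (x y : α) (m i : ℕ) : Fin m → α :=
  fun j => if (j : ℕ) + 1 < i then x else y

lemma domainWall_eq_or_eq (x y : α) (m i : ℕ) (j : Fin m) :
    domainWall x y m i j = x ∨ domainWall x y m i j = y :=
  ite_eq_or_eq _ _ _

lemma domainWall_injOn (hxy : x ≠ y) :
    Set.InjOn (domainWall x y m) (Finset.Icc 1 (m + 1) : Finset ℕ) := by
  intro i hi i' hi' heq
  rw [Finset.mem_coe, Finset.mem_Icc] at hi hi'
  by_contra hne
  wlog hlt : i < i' generalizing i i'
  · exact this hi' hi heq.symm (Ne.symm hne) (by omega)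
  have hval := congrFun heq ⟨i - 1, by omega⟩
  simp only [domainWall] at hval
  rw [if_neg (by omega), if_pos (by omega)] at hval
  exact hxy hval.symm

variable [Preorder α]

lemma antitone_domainWall (hyx : y ≤ x) (i : ℕ) : Antitone (domainWall x y m i) := by
  intro j k hjk
  have : (j : ℕ) ≤ k := hjk
  unfold domainWall
  split_ifs
  exacts [le_rfl, by omega, hyx, le_rfl]

lemma exists_eq_domainWall_of_antitone {f : Fin m → α} (hyx : y < x)
    (hf : ∀ j, f j = x ∨ f j = y) (hanti : Antitone f) :
    ∃ i ∈ Finset.Icc 1 (m + 1), f = domainWall x y m i := by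
  classical
  have hex : ∃ i, 1 ≤ i ∧ ∀ j : Fin m, i ≤ (j : ℕ) + 1 → f j = y :=
    ⟨m + 1, by omega, fun j hj => by omega⟩
  obtain ⟨one_le, eq_y⟩ := Nat.find_spec hex
  have le_succ : Nat.find hex ≤ m + 1 :=
    Nat.find_min' hex ⟨by omega, fun j hj => by omega⟩
  refine ⟨Nat.find hex, Finset.mem_Icc.2 ⟨one_le, le_succ⟩, funext fun j => ?_⟩
  unfold domainWall
  split_ifs with hj
  · obtain ⟨k, hjk, hk⟩ : ∃ k : Fin m, j ≤ k ∧ f k ≠ y := by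
      simpa using Nat.find_min hex hj
    have hxj : x ≤ f j := ((hf k).resolve_right hk).ge.trans (hanti hjk)
    exact (hf j).resolve_right fun hjy => (hyx.trans_le hxj).ne' hjy
  · exact eq_y j (not_lt.1 hj)

lemma antitone_iff_existsUnique_domainWall {f : Fin m → α} (hyx : y < x)
    (hf : ∀ j, f j = x ∨ f j = y) :
    Antitone f ↔ ∃! i, i ∈ Finset.Icc 1 (m + 1) ∧ f = domainWall x y m i := by
  constructor
  · intro hanti
    obtain ⟨i, hi, rfl⟩ := exists_eq_domainWall_of_antitone hyx hf hanti
    exact ⟨i, ⟨hi, rfl⟩, fun k ⟨hk, h⟩ => domainWall_injOn hyx.ne' hk hi h.symm⟩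
  · rintro ⟨i, ⟨-, rfl⟩, -⟩
    exact antitone_domainWall hyx.le i

lemma ncard_antitone_two_valued (hyx : y < x) :
    {f : Fin m → α | (∀ j, f j = x ∨ f j = y) ∧ Antitone f}.ncard = m + 1 := by
  have image_eq : {f : Fin m → α | (∀ j, f j = x ∨ f j = y) ∧ Antitone f} =
      domainWall x y m '' (Finset.Icc 1 (m + 1) : Finset ℕ) := by
    ext f
    constructor
    · rintro ⟨hf, hanti⟩
      obtain ⟨i, hi, rfl⟩ := exists_eq_domainWall_of_antitone hyx hf hanti
      exact Set.mem_image_of_mem _ hi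
    · rintro ⟨i, -, rfl⟩
      exact ⟨domainWall_eq_or_eq x y m i, antitone_domainWall hyx.le i⟩
  rw [image_eq, (domainWall_injOn hyx.ne').ncard_image, Set.ncard_coe_finset, Nat.card_Icc,
    Nat.add_sub_cancel]

end DomainWall

section Energy

variable {R : Type*} [CommRing R] {n : ℕ}

/-- The energy sum `g` of a chain of `n + 1` interior spins between a left boundary spin `+1` and
a right boundary spin `-1`; the block length is `n + 2`. -/
def plusMinusEnergy (σ : Fin (n + 1) → R) : R :=
  σ 0 + ∑ i : Fin n, σ i.castSucc * σ i.succ - σ (Fin.last n)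

lemma plusMinusEnergy_eq_sub_sum (σ : Fin (n + 1) → R) :
    plusMinusEnergy σ = n - ∑ i : Fin n, (1 - σ i.castSucc) * (1 + σ i.succ) := by
  have telescope : σ 0 + ∑ i : Fin n, σ i.succ = ∑ i : Fin n, σ i.castSucc + σ (Fin.last n) :=
    (Fin.sum_univ_succ σ).symm.trans (Fin.sum_univ_castSucc σ)
  have expand : ∑ i : Fin n, (1 - σ i.castSucc) * (1 + σ i.succ) =
      n + ∑ i : Fin n, σ i.succ - ∑ i : Fin n, σ i.castSucc
        - ∑ i : Fin n, σ i.castSucc * σ i.succ := by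
    simp only [sub_mul, mul_add, one_mul, mul_one, Finset.sum_sub_distrib, Finset.sum_add_distrib,
      Finset.sum_const, Finset.card_univ, Fintype.card_fin, nsmul_eq_mul]
    ring
  rw [plusMinusEnergy, expand]
  linear_combination telescope

variable [LinearOrder R] [IsStrictOrderedRing R]

lemma one_sub_mul_one_add_nonneg {x y : R} (hx : |x| ≤ 1) (hy : |y| ≤ 1) :
    0 ≤ (1 - x) * (1 + y) :=
  mul_nonneg (sub_nonneg.2 (abs_le.1 hx).2) (neg_le_iff_add_nonneg'.1 (abs_le.1 hy).1)

lemma plusMinusEnergy_le {σ : Fin (n + 1) → R} (hσ : ∀ i, |σ i| ≤ 1) :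
    plusMinusEnergy σ ≤ n := by
  rw [plusMinusEnergy_eq_sub_sum, sub_le_self_iff]
  exact Finset.sum_nonneg fun i _ => one_sub_mul_one_add_nonneg (hσ _) (hσ _)

lemma one_sub_mul_one_add_eq_zero_iff_le {x y : R} (hx : x = 1 ∨ x = -1) (hy : y = 1 ∨ y = -1) :
    (1 - x) * (1 + y) = 0 ↔ y ≤ x := by
  rcases hx with rfl | rfl <;> rcases hy with rfl | rfl <;> norm_num

lemma plusMinusEnergy_eq_iff_antitone {σ : Fin (n + 1) → R} (hσ : ∀ i, σ i = 1 ∨ σ i = -1) :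
    plusMinusEnergy σ = n ↔ Antitone σ := by
  have abs_le_one (i : Fin (n + 1)) : |σ i| ≤ 1 := ((abs_eq zero_le_one).2 (hσ i)).le
  rw [plusMinusEnergy_eq_sub_sum, sub_eq_self, Fin.antitone_iff_succ_le,
    Finset.sum_eq_zero_iff_of_nonneg fun i _ =>
      one_sub_mul_one_add_nonneg (abs_le_one _) (abs_le_one _)]
  simp only [Finset.mem_univ, true_imp_iff, one_sub_mul_one_add_eq_zero_iff_le (hσ _) (hσ _)]

end Energy

lemma bondSum_add_two {n : ℕ} (σ : Fin (n + 1) → ℤ) :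
    bondSum (n + 2) σ = ∑ i : Fin n, σ i.castSucc * σ i.succ := by
  change ∑ i : Fin (n + 1), (if h : (i : ℕ) + 1 < n + 1 then σ i * σ ⟨i + 1, h⟩ else 0) = _
  simp [Fin.sum_univ_castSucc, Fin.succ]

lemma firstSpin_add_bondSum_sub_lastSpin {n : ℕ} (σ : Fin (n + 1) → ℤ) :
    firstSpin (n + 2) σ + bondSum (n + 2) σ - lastSpin (n + 2) σ = plusMinusEnergy σ := by
  have first : firstSpin (n + 2) σ = σ 0 := dif_pos n.succ_pos
  have last : lastSpin (n + 2) σ = σ (Fin.last n) := dif_pos n.lt_succ_self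
  rw [first, last, bondSum_add_two, plusMinusEnergy]

/-- **Maximizers for `+/−` boundary spins.**  For `b ≥ 2` and
`g(σ) = σ₁ + Σ_{i=1}^{b−2} σᵢσᵢ₊₁ − σ_{b−1}` on `{−1,1}^{b−1}`, the maximum of `g`
equals `b − 2`, and the set of maximizers has exactly `b` elements: for each
`i ∈ {1, …, b}` there is exactly one maximizer, namely the configuration with
`σⱼ = 1` for `1 ≤ j ≤ i−1` and `σⱼ = −1` for `i ≤ j ≤ b−1` (here site `j`
corresponds to the index `j−1` of `Fin (b−1)`). -/
theorem plus_minus_maximizers (b : ℕ) (hb : 2 ≤ b) :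
    (∀ σ : Fin (b - 1) → ℤ, (∀ i, σ i = 1 ∨ σ i = -1) →
      firstSpin b σ + bondSum b σ - lastSpin b σ ≤ (b : ℤ) - 2) ∧
    (∀ σ : Fin (b - 1) → ℤ, (∀ i, σ i = 1 ∨ σ i = -1) →
      (firstSpin b σ + bondSum b σ - lastSpin b σ = (b : ℤ) - 2 ↔
        ∃! i : ℕ, i ∈ Finset.Icc 1 b ∧
          σ = fun j : Fin (b - 1) => if (j : ℕ) + 1 < i then 1 else -1)) ∧
    {σ : Fin (b - 1) → ℤ | (∀ i, σ i = 1 ∨ σ i = -1) ∧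
        firstSpin b σ + bondSum b σ - lastSpin b σ = (b : ℤ) - 2}.ncard = b := by
  obtain ⟨n, rfl⟩ := Nat.exists_eq_add_of_le' hb
  have max_eq : ((n + 2 : ℕ) : ℤ) - 2 = n := by push_cast; ring
  have neg_lt : (-1 : ℤ) < 1 := by norm_num
  simp only [max_eq, firstSpin_add_bondSum_sub_lastSpin]
  refine ⟨fun σ hσ => ?_, fun σ hσ => ?_, ?_⟩
  · exact plusMinusEnergy_le fun i => ((abs_eq zero_le_one).2 (hσ i)).le
  · exact (plusMinusEnergy_eq_iff_antitone hσ).trans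
      (antitone_iff_existsUnique_domainWall neg_lt hσ)
  · have maximizers_eq : {σ : Fin (n + 1) → ℤ | (∀ i, σ i = 1 ∨ σ i = -1) ∧
        plusMinusEnergy σ = n} = {σ | (∀ i, σ i = 1 ∨ σ i = -1) ∧ Antitone σ} :=
      Set.ext fun σ => and_congr_right plusMinusEnergy_eq_iff_antitone
    exact maximizers_eq ▸ ncard_antitone_two_valued neg_lt
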